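/- arXiv:2112.05894 — 2 statements merged into one kernel-verified Lean document; each statement's English description precedes it below -/
import Mathlib

section
/- Let P be a finite set with a partial order <' and let ≺_1, …, ≺_k be linearizations of <' (linear orders on P with p <' q implying p ≺_i q). For a linearization ≺ of <', let Δ_{≺,<'} = conv{1_{max_{<'} J} : J is an order ideal of (P,≺)} ⊆ ℝ^P and let O(P,≺) = {x ∈ ℝ^P : 0 ≤ x_p ≤ 1 for all p, and x_p ≤ x_q whenever q ≺ p}. If the union ⋃_{i=1}^k Δ_{≺_i,<'} is a convex set, then the union ⋃_{i=1}^k O(P,≺_i) is also a convex set. -/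
open Pointwise

/-- `J` is an order ideal (lower set) with respect to the strict order relation `r`. -/
def IsLowerIdeal {P : Type*} (r : P → P → Prop) (J : Set P) : Prop :=
  ∀ ⦃p q : P⦄, r p q → q ∈ J → p ∈ J

/-- The set of `r`-maximal elements of `J`. -/
def maxElems {P : Type*} (r : P → P → Prop) (J : Set P) : Set P :=
  {p ∈ J | ∀ q ∈ J, ¬ r p q}

/-- The 0/1 indicator vector of `A ⊆ P`, as a point of `ℝ^P`. -/
noncomputable def ind {P : Type*} (A : Set P) : P → ℝ :=
  A.indicator 1

/-- The order ideal of `(P, r)` generated by `A`. -/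
def genIdeal {P : Type*} (r : P → P → Prop) (A : Set P) : Set P :=
  {p | ∃ q ∈ A, p = q ∨ r p q}

/-- The Hibi–Li operation `J1 *' J2` relative to the order `r`: the order ideal of `(P, r)`
generated by `(J1 ∩ J2) ∩ (max_r J1 ∪ max_r J2)`. -/
def starOp {P : Type*} (r : P → P → Prop) (J1 J2 : Set P) : Set P :=
  genIdeal r ((J1 ∩ J2) ∩ (maxElems r J1 ∪ maxElems r J2))

/-- The relative poset polytope `R(P, lt, lt')`: the convex hull of the points
`1_{max_{lt'} J}` over all order ideals `J` of `(P, lt)`. -/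
noncomputable def RPP {P : Type*} (lt lt' : P → P → Prop) : Set (P → ℝ) :=
  convexHull ℝ {x | ∃ J : Set P, IsLowerIdeal lt J ∧ x = ind (maxElems lt' J)}

/-- The dilation `m·Q = {m·x : x ∈ Q}`. -/
def dilate {P : Type*} (m : ℕ) (Q : Set (P → ℝ)) : Set (P → ℝ) :=
  (fun x => (m : ℝ) • x) '' Q

/-- The order polytope of `(P, lt)`. -/
def orderPolytope {P : Type*} (lt : P → P → Prop) : Set (P → ℝ) :=
  {x | (∀ p, 0 ≤ x p ∧ x p ≤ 1) ∧ ∀ p q, lt q p → x p ≤ x q}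

/-- The chain polytope of `(P, lt)`. -/
def chainPolytope {P : Type*} (lt : P → P → Prop) : Set (P → ℝ) :=
  {x | (∀ p, 0 ≤ x p) ∧ ∀ (k : ℕ) (c : Fin k → P),
    (∀ i j : Fin k, i < j → lt (c i) (c j)) → (∑ i, x (c i)) ≤ 1}

/-! The map `Φ(x)_p = x_p - max_{p <' q} x_q` does not involve the linearizations. It is injective,
and on each order polytope `O(P, ≺)` it is linear and sends `1_J` to `1_{max J}`, so it carries the
simplex with vertices `1_J` onto `Δ_{≺,<'}`.

If `p` and `q` are adjacent in some `≺_i` and `≺_j` orders them the other way, start at the image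
`Φ(x)` of a generic point `x` of the wall `x_p = x_q` of `O(P, ≺_i)` and move slightly towards the
vertex of `Δ_{≺_j,<'}` given by the principal ideal of `q`. By convexity we stay in the union, and
the preimages under `Φ` satisfy `v_p < v_q`; so we have entered the simplex of some `≺_j'`, which
must be `≺_i` with `p` and `q` exchanged.

Hence a point `z` that is antitone for the intersection of the `≺_i` lies in the `O(P, ≺_i)` for
which `z` has fewest inversions, and the union of the `O(P, ≺_i)` is the order polytope of the
intersection. -/

open Filter Topology
open AffineMap (lineMap lineMap_apply_zero lineMap_apply_module lineMap_continuous)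

section Convex

variable {ι E : Type*} [AddCommGroup E] [Module ℝ E] [TopologicalSpace E] [IsTopologicalAddGroup E]
  [ContinuousSMul ℝ E]

theorem exists_mem_and_lineMap_mem_of_convex_iUnion {D : ι → Set E} (hfin : (Set.range D).Finite)
    (hclosed : ∀ i, IsClosed (D i)) (hconv : Convex ℝ (⋃ i, D i)) {y w : E}
    (hy : y ∈ ⋃ i, D i) (hw : w ∈ ⋃ i, D i) :
    ∃ i, y ∈ D i ∧ ∃ e ∈ Set.Ioc (0 : ℝ) 1, lineMap y w e ∈ D i := by
  let K : Set E := ⋃₀ {A ∈ Set.range D | y ∉ A}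
  have hK : IsClosed K := by
    rw [show K = _ from Set.sUnion_eq_biUnion]
    refine (hfin.subset (Set.sep_subset _ _)).isClosed_biUnion ?_
    rintro _ ⟨⟨i, rfl⟩, -⟩
    exact hclosed i
  have hyK : y ∉ K := fun ⟨_, hA, hyA⟩ => hA.2 hyA
  have hlim : Tendsto (lineMap y w) (𝓝[>] (0 : ℝ)) (𝓝 y) :=
    (lineMap_continuous.tendsto' _ _ (lineMap_apply_zero y w)).mono_left nhdsWithin_le_nhds
  obtain ⟨e, heK, he⟩ := ((hlim.eventually_mem (hK.isOpen_compl.mem_nhds hyK)).and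
    (Ioc_mem_nhdsGT zero_lt_one)).exists
  obtain ⟨i, hi⟩ := Set.mem_iUnion.mp (hconv.lineMap_mem hy hw ⟨he.1.le, he.2⟩)
  refine ⟨i, ?_, e, he, hi⟩
  by_contra hyi
  exact heK ⟨D i, ⟨⟨i, rfl⟩, hyi⟩, hi⟩

end Convex

section Relation

variable {P : Type*} {r : P → P → Prop}

theorem rel_update_of_adjacent [DecidableEq P] [IsStrictTotalOrder P r] {p q : P} (hpq : r p q)
    (hadj : ∀ c, r p c → ¬ r c q) {a b : P} (hab : r a b) (hne : (a, b) ≠ (p, q)) :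
    r (Function.update id p q a) (Function.update id p q b) := by
  by_cases ha : a = p
  · subst ha
    have hba : b ≠ a := fun h => irrefl_of r a (h ▸ hab)
    have hbq : b ≠ q := fun h => hne (h ▸ rfl)
    have hqb : r q b :=
      (trichotomous_of r q b).resolve_right (not_or_intro hbq.symm (hadj b hab))
    simpa [hba] using hqb
  · by_cases hb : b = p
    · subst hb
      simpa [ha] using trans_of r hab hpq
    · simpa [ha, hb] using hab

theorem exists_adjacent_lt_of_rel_of_lt [Finite P] [IsStrictOrder P r] {α : Type*} [LinearOrder α]
    {z : P → α} {a b : P} (hab : r a b) (hz : z a < z b) :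
    ∃ p q, r p q ∧ (∀ c, r p c → ¬ r c q) ∧ z p < z q := by
  classical
  cases nonempty_fintype P
  let : PartialOrder P := partialOrderOfSO r
  let : LocallyFiniteOrder P := Fintype.toLocallyFiniteOrder
  have hanti : ¬ Antitone z := fun h => (h (le_of_lt hab)).not_gt hz
  rw [antitone_iff_forall_covBy] at hanti
  push Not at hanti
  obtain ⟨p, q, hcov, hlt⟩ := hanti
  exact ⟨p, q, hcov.lt, fun _ => @hcov.2 _, hlt⟩

end Relation

section OrderPolytope

variable {P : Type*} {r : P → P → Prop}

theorem convex_orderPolytope (r : P → P → Prop) : Convex ℝ (orderPolytope r) := by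
  have hbox : Convex ℝ {x : P → ℝ | ∀ p, 0 ≤ x p ∧ x p ≤ 1} := by
    simpa only [Set.pi, Set.mem_univ, true_imp_iff, Set.mem_Icc] using
      convex_pi (s := Set.univ) fun (_ : P) _ => convex_Icc (0 : ℝ) 1
  refine hbox.inter fun x hx y hy a b ha hb _ p q hqp => ?_
  exact add_le_add (mul_le_mul_of_nonneg_left (hx p q hqp) ha)
    (mul_le_mul_of_nonneg_left (hy p q hqp) hb)

theorem orderPolytope_anti {r' : P → P → Prop} (h : ∀ p q, r p q → r' p q) :
    orderPolytope r' ⊆ orderPolytope r :=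
  fun _ hx => ⟨hx.1, fun p q hqp => hx.2 p q (h q p hqp)⟩

theorem rel_of_mem_orderPolytope_of_lt [Std.Trichotomous r] {x : P → ℝ} (hx : x ∈ orderPolytope r)
    {a b : P} (h : x b < x a) : r a b := by
  rcases trichotomous_of r a b with hab | rfl | hba
  · exact hab
  · exact absurd h (lt_irrefl _)
  · exact absurd (hx.2 a b hba) h.not_ge

theorem ind_of_mem {J : Set P} {p : P} (h : p ∈ J) : ind J p = 1 :=
  Set.indicator_of_mem h 1

theorem ind_of_notMem {J : Set P} {p : P} (h : p ∉ J) : ind J p = 0 :=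
  Set.indicator_of_notMem h 1

theorem ind_mem_orderPolytope {J : Set P} (hJ : IsLowerIdeal r J) : ind J ∈ orderPolytope r := by
  have hind (p : P) : 0 ≤ ind J p ∧ ind J p ≤ 1 := by
    by_cases hp : p ∈ J
    · simp [ind_of_mem hp]
    · simp [ind_of_notMem hp]
  refine ⟨hind, fun p q hqp => ?_⟩
  by_cases hp : p ∈ J
  · rw [ind_of_mem hp, ind_of_mem (hJ hqp hp)]
  · exact ind_of_notMem hp ▸ (hind q).1

/-- The indicator vectors of the order ideals of `(P, r)`, that is, the vertices of its order
polytope. -/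
def idealIndicators (r : P → P → Prop) : Set (P → ℝ) :=
  ind '' {J | IsLowerIdeal r J}

theorem convexHull_idealIndicators_subset (r : P → P → Prop) :
    convexHull ℝ (idealIndicators r) ⊆ orderPolytope r :=
  convexHull_min (Set.image_subset_iff.mpr fun _ hJ => ind_mem_orderPolytope hJ)
    (convex_orderPolytope r)

theorem exists_generic_point_of_wall [Finite P] [IsStrictTotalOrder P r] {p q : P} (hpq : r p q)
    (hadj : ∀ c, r p c → ¬ r c q) :
    ∃ x ∈ convexHull ℝ (idealIndicators r), x p = x q ∧
      ∀ a b, r a b → (a, b) ≠ (p, q) → x b < x a := by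
  classical
  cases nonempty_fintype P
  have : Nonempty P := ⟨p⟩
  let f : P → P := Function.update id p q
  have hf {a b : P} (hab : r a b) (hne : (a, b) ≠ (p, q)) : r (f a) (f b) :=
    rel_update_of_adjacent hpq hadj hab hne
  have hfpq : f p = f q := by
    have hqp : q ≠ p := fun h => irrefl_of r p (h ▸ hpq)
    simp [f, hqp]
  let J (d : P) : Set P := {c | r (f c) d}
  have hJ (d : P) : IsLowerIdeal r (J d) := fun a b hab hb => by
    by_cases hne : (a, b) = (p, q)
    · obtain ⟨rfl, rfl⟩ := Prod.mk.inj hne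
      change r (f a) d
      rwa [hfpq]
    · exact trans_of r (hf hab hne) hb
  have hcard : (0 : ℝ) < (Fintype.card P : ℝ)⁻¹ := by positivity
  refine ⟨∑ d, (Fintype.card P : ℝ)⁻¹ • ind (J d), ?_, ?_, fun a b hab hne => ?_⟩
  · exact (convex_convexHull ℝ _).sum_mem (fun _ _ => hcard.le) (by simp)
      fun d _ => subset_convexHull ℝ _ ⟨J d, hJ d, rfl⟩
  · simp [ind, Set.indicator_apply, J, hfpq]
  · simp only [Finset.sum_apply, Pi.smul_apply]
    refine Finset.sum_lt_sum (fun d _ => ?_) ⟨f b, Finset.mem_univ _, ?_⟩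
    · exact smul_le_smul_of_nonneg_left ((ind_mem_orderPolytope (hJ d)).2 b a hab) hcard.le
    · have ha : a ∈ J (f b) := hf hab hne
      have hb : b ∉ J (f b) := irrefl_of r (f b)
      simpa [ind_of_mem ha, ind_of_notMem hb] using hcard

end OrderPolytope

section Transfer

variable {P : Type*} {lt' r : P → P → Prop}

/-- The transfer map `Φ(x)_p = x_p - max_{p <' q} x_q` from order polytopes to relative poset
polytopes. The maximum over the empty set is `0`, which is what the real-valued `⨆` returns. -/
noncomputable def transfer (lt' : P → P → Prop) (x : P → ℝ) (p : P) : ℝ :=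
  x p - ⨆ q : {q // lt' p q}, x q

theorem transfer_smul {c : ℝ} (hc : 0 ≤ c) (x : P → ℝ) :
    transfer lt' (c • x) = c • transfer lt' x := by
  ext p
  simp only [transfer, Pi.smul_apply, smul_eq_mul, mul_sub, Real.mul_iSup_of_nonneg hc]

theorem eqOn_of_eqOn_transfer (hwf : WellFounded (Function.swap lt')) {T : Set P}
    (hT : IsLowerIdeal (Function.swap lt') T) {x y : P → ℝ}
    (h : Set.EqOn (transfer lt' x) (transfer lt' y) T) : Set.EqOn x y T := by
  intro a ha
  induction a using hwf.induction with
  | _ a ih =>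
    have hsup : ⨆ q : {q // lt' a q}, x q = ⨆ q : {q // lt' a q}, y q :=
      iSup_congr fun q => ih q q.2 (hT q.2 ha)
    have := h ha
    simp only [transfer, hsup] at this
    linarith

theorem wellFounded_swap_of_forall_rel [Finite P] [IsStrictOrder P r]
    (hr : ∀ p q, lt' p q → r p q) : WellFounded (Function.swap lt') :=
  Subrelation.wf (fun h => hr _ _ h) (Finite.wellFounded_of_trans_of_irrefl (Function.swap r))

theorem transfer_injective (hwf : WellFounded (Function.swap lt')) :
    Function.Injective (transfer lt') :=
  fun _ _ h => funext fun p =>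
    eqOn_of_eqOn_transfer hwf (T := Set.univ) (fun _ _ _ _ => trivial) (fun _ _ => h ▸ rfl)
      (Set.mem_univ p)

theorem iSup_ind_of_forall_notMem {A J : Set P} (h : ∀ q ∈ A, q ∉ J) : ⨆ q : A, ind J q = 0 := by
  have (q : A) : ind J q = 0 := ind_of_notMem (h q q.2)
  simp only [this, Real.iSup_const_zero]

theorem iSup_ind_of_mem {A J : Set P} {q : P} (hA : q ∈ A) (hJ : q ∈ J) : ⨆ q : A, ind J q = 1 := by
  have hle (b : A) : ind J b ≤ 1 := Set.indicator_le_self' (fun _ _ => zero_le_one) _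
  have : Nonempty A := ⟨q, hA⟩
  refine le_antisymm (ciSup_le hle) ?_
  exact ind_of_mem hJ ▸
    le_ciSup (f := fun b : A => ind J b) ⟨1, Set.forall_mem_range.mpr hle⟩ ⟨q, hA⟩

theorem transfer_ind {J : Set P} (hJ : IsLowerIdeal lt' J) :
    transfer lt' (ind J) = ind (maxElems lt' J) := by
  ext p
  by_cases hq : ∃ q ∈ J, lt' p q
  · obtain ⟨q, hqJ, hpq⟩ := hq
    have hp : p ∈ J := hJ hpq hqJ
    have hpmax : p ∉ maxElems lt' J := fun h => h.2 q hqJ hpq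
    have hsup : ⨆ q : {q // lt' p q}, ind J q = 1 := iSup_ind_of_mem (A := {q | lt' p q}) hpq hqJ
    rw [transfer, hsup, ind_of_mem hp, ind_of_notMem hpmax, sub_self]
  · push Not at hq
    have hpmax : p ∈ maxElems lt' J ↔ p ∈ J := ⟨And.left, fun h => ⟨h, hq⟩⟩
    have hsup : ⨆ q : {q // lt' p q}, ind J q = 0 :=
      iSup_ind_of_forall_notMem (A := {q | lt' p q}) fun q hpq hqJ => hq q hqJ hpq
    classical
    rw [transfer, hsup, sub_zero]
    simp only [ind, Set.indicator_apply, hpmax]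

theorem exists_linearMap_eqOn_iSup [Finite P] [IsStrictTotalOrder P r] (A : Set P) :
    ∃ l : (P → ℝ) →ₗ[ℝ] ℝ, Set.EqOn (fun x => ⨆ q : A, x q) l (orderPolytope r) := by
  rcases A.eq_empty_or_nonempty with rfl | hA
  · exact ⟨0, fun x _ => by simp⟩
  · obtain ⟨m, hm, hmin⟩ := (Finite.wellFounded_of_trans_of_irrefl r).has_min A hA
    refine ⟨LinearMap.proj m, fun x hx => ?_⟩
    have hle (q : A) : x q ≤ x m := by
      by_contra! h
      exact hmin q q.2 (rel_of_mem_orderPolytope_of_lt hx h)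
    have : Nonempty A := ⟨m, hm⟩
    exact le_antisymm (ciSup_le hle)
      (le_ciSup (f := fun q : A => x q) ⟨x m, Set.forall_mem_range.mpr hle⟩ ⟨m, hm⟩)

theorem exists_linearMap_eqOn_transfer [Finite P] [IsStrictTotalOrder P r] (lt' : P → P → Prop) :
    ∃ L : (P → ℝ) →ₗ[ℝ] P → ℝ, Set.EqOn (transfer lt') L (orderPolytope r) := by
  choose l hl using fun p => exists_linearMap_eqOn_iSup (r := r) {q | lt' p q}
  refine ⟨LinearMap.pi fun p => LinearMap.proj p - l p, fun x hx => funext fun p => ?_⟩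
  exact congrArg (x p - ·) (hl p hx)

theorem RPP_eq_image_transfer [Finite P] [IsStrictTotalOrder P r] (hr : ∀ p q, lt' p q → r p q) :
    RPP r lt' = transfer lt' '' convexHull ℝ (idealIndicators r) := by
  obtain ⟨L, hL⟩ := exists_linearMap_eqOn_transfer (r := r) lt'
  have hvertices : {x | ∃ J, IsLowerIdeal r J ∧ x = ind (maxElems lt' J)} =
      L '' idealIndicators r := by
    rw [idealIndicators, Set.image_image]
    ext x
    refine exists_congr fun J => and_congr_right fun hJ => ?_
    beta_reduce
    rw [← hL (ind_mem_orderPolytope hJ), transfer_ind fun p q hpq => hJ (hr p q hpq), eq_comm]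
  rw [RPP, hvertices, ← L.image_convexHull,
    (hL.mono (convexHull_idealIndicators_subset r)).image_eq]

theorem isClosed_RPP [Finite P] (r lt' : P → P → Prop) : IsClosed (RPP r lt') := by
  refine Set.Finite.isClosed_convexHull ℝ
    ((Set.toFinite (Set.range fun J => ind (maxElems lt' J))).subset ?_)
  rintro _ ⟨J, -, rfl⟩
  exact ⟨J, rfl⟩

end Transfer

section Exchange

variable {P : Type*} {lt' r : P → P → Prop}

theorem isLowerIdeal_genIdeal [IsTrans P r] (A : Set P) : IsLowerIdeal r (genIdeal r A) := by
  rintro a b hab ⟨q, hq, rfl | hbq⟩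
  · exact ⟨b, hq, Or.inr hab⟩
  · exact ⟨q, hq, Or.inr (trans_of r hab hbq)⟩

theorem notMem_genIdeal_singleton_of_rel [IsStrictOrder P r] {q b : P} (hqb : r q b) :
    b ∉ genIdeal r {q} := by
  rintro ⟨_, rfl, rfl | hbq⟩
  · exact irrefl_of r b hqb
  · exact asymm_of r hqb hbq

theorem mem_maxElems_genIdeal_singleton [IsStrictOrder P r] (hr : ∀ p q, lt' p q → r p q) (q : P) :
    q ∈ maxElems lt' (genIdeal r {q}) :=
  ⟨⟨q, rfl, Or.inl rfl⟩, fun b hb hqb => notMem_genIdeal_singleton_of_rel (hr q b hqb) hb⟩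

-- Above `q` the target vertex vanishes, so there `v` is the multiple `(1 - e) • x`.
theorem lt_of_transfer_eq_lineMap [Finite P] [IsStrictOrder P r] (hr : ∀ p q, lt' p q → r p q)
    {p q : P} (hqp : r q p) {x v : P → ℝ} (hx : x p = x q) {e : ℝ} (he : e ∈ Set.Ioc 0 1)
    (hv : transfer lt' v =
      lineMap (transfer lt' x) (ind (maxElems lt' (genIdeal r {q}))) e) :
    v p < v q := by
  have he' : 0 ≤ 1 - e := sub_nonneg.mpr he.2
  have hval (b : P) : transfer lt' v b =
      transfer lt' ((1 - e) • x) b + e * ind (maxElems lt' (genIdeal r {q})) b := by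
    simp [hv, lineMap_apply_module, transfer_smul he']
  have habove : Set.EqOn v ((1 - e) • x) {b | r q b} := by
    refine eqOn_of_eqOn_transfer (wellFounded_swap_of_forall_rel hr)
      (fun a b hba hqb => trans_of r hqb (hr b a hba)) ?_
    intro b hqb
    have hb : b ∉ maxElems lt' (genIdeal r {q}) :=
      fun h => notMem_genIdeal_singleton_of_rel hqb h.1
    rw [hval, ind_of_notMem hb, mul_zero, add_zero]
  have hvq : v q = (1 - e) * x q + e := by
    have hsup : ⨆ b : {b // lt' q b}, v b = ⨆ b : {b // lt' q b}, ((1 - e) • x) b :=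
      iSup_congr fun b => habove (hr q b b.2)
    have := hval q
    simp only [transfer, hsup, ind_of_mem (mem_maxElems_genIdeal_singleton hr q), Pi.smul_apply,
      smul_eq_mul] at this
    linarith
  have hvp : v p = (1 - e) * x q := hx ▸ habove hqp
  linarith [he.1]

theorem exists_exchange_of_adjacent [Finite P] {ι : Type*} {r : ι → P → P → Prop}
    [∀ i, IsStrictTotalOrder P (r i)] (hr : ∀ i p q, lt' p q → r i p q)
    (hconv : Convex ℝ (⋃ i, RPP (r i) lt')) {i j : ι} {p q : P} (hpq : r i p q)
    (hadj : ∀ c, r i p c → ¬ r i c q) (hqp : r j q p) :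
    ∃ k, r k q p ∧ ∀ a b, r i a b → (a, b) ≠ (p, q) → r k a b := by
  have hfin : (Set.range fun i => RPP (r i) lt').Finite :=
    (Set.toFinite (Set.range fun s => RPP s lt')).subset
      (Set.range_comp_subset_range r fun s => RPP s lt')
  obtain ⟨x, hx, hxpq, hxlt⟩ := exists_generic_point_of_wall hpq hadj
  have hy : transfer lt' x ∈ ⋃ i, RPP (r i) lt' :=
    Set.mem_iUnion.mpr ⟨i, RPP_eq_image_transfer (hr i) ▸ Set.mem_image_of_mem _ hx⟩
  have hw : ind (maxElems lt' (genIdeal (r j) {q})) ∈ ⋃ i, RPP (r i) lt' :=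
    Set.mem_iUnion.mpr ⟨j, subset_convexHull ℝ _ ⟨_, isLowerIdeal_genIdeal {q}, rfl⟩⟩
  obtain ⟨k, hyk, e, he, hek⟩ := exists_mem_and_lineMap_mem_of_convex_iUnion hfin
    (fun i => isClosed_RPP (r i) lt') hconv hy hw
  rw [RPP_eq_image_transfer (hr k)] at hyk hek
  have hxk : x ∈ convexHull ℝ (idealIndicators (r k)) :=
    (transfer_injective (wellFounded_swap_of_forall_rel (hr i))).mem_set_image.mp hyk
  obtain ⟨v, hvk, hv⟩ := hek
  have hsub := convexHull_idealIndicators_subset (r k)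
  have hvpq : v p < v q := lt_of_transfer_eq_lineMap (hr j) hqp hxpq he hv
  exact ⟨k, rel_of_mem_orderPolytope_of_lt (hsub hvk) hvpq,
    fun a b hab hne => rel_of_mem_orderPolytope_of_lt (hsub hxk) (hxlt a b hab hne)⟩

end Exchange

section Inversions

variable {P α : Type*} [Preorder α]

/-- The pairs witnessing that `z` is not antitone along `r`; for real-valued `z` there are none
exactly when `z` satisfies the order inequalities of `orderPolytope r`. -/
def inversions (r : P → P → Prop) (z : P → α) : Set (P × P) :=
  {t | r t.1 t.2 ∧ z t.1 < z t.2}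

theorem inversions_ssubset_of_exchange {r s : P → P → Prop} [Std.Trichotomous r] [IsStrictOrder P s]
    {z : P → α} {p q : P} (hpq : r p q) (hz : z p < z q) (hqp : s q p)
    (hrs : ∀ a b, r a b → (a, b) ≠ (p, q) → s a b) :
    inversions s z ⊂ inversions r z := by
  refine ⟨fun ⟨c, d⟩ ⟨hcd, hzcd⟩ => ⟨?_, hzcd⟩, fun h => ?_⟩
  · rcases trichotomous_of r c d with h | rfl | hdc
    · exact h
    · exact absurd hcd (irrefl_of s c)
    · have hne : (d, c) ≠ (p, q) := by
        rintro ⟨⟩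
        exact hz.asymm hzcd
      exact absurd hcd (asymm_of s (hrs d c hdc hne))
  · exact asymm_of s hqp (h (show (p, q) ∈ inversions r z from ⟨hpq, hz⟩)).1

end Inversions

theorem iUnion_orderPolytope_eq_of_convex_iUnion_RPP [Finite P] {ι : Type*} [Nonempty ι]
    {lt' : P → P → Prop} {r : ι → P → P → Prop} [∀ i, IsStrictTotalOrder P (r i)]
    (hr : ∀ i p q, lt' p q → r i p q) (hconv : Convex ℝ (⋃ i, RPP (r i) lt')) :
    ⋃ i, orderPolytope (r i) = orderPolytope fun p q => ∀ i, r i p q := by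
  refine (Set.iUnion_subset fun i => orderPolytope_anti fun p q h => h i).antisymm fun z hz => ?_
  let i : ι := Function.argmin fun i => (inversions (r i) z).ncard
  refine Set.mem_iUnion.mpr ⟨i, hz.1, fun b a hab => ?_⟩
  by_contra! hlt
  obtain ⟨p, q, hpq, hadj, hzpq⟩ := exists_adjacent_lt_of_rel_of_lt hab hlt
  obtain ⟨j, hqp⟩ : ∃ j, r j q p := by
    by_contra! hnot
    have hne : p ≠ q := fun h => hzpq.ne (congrArg z h)
    exact hzpq.not_ge (hz.2 q p fun j =>
      (trichotomous_of (r j) p q).resolve_right (not_or_intro hne (hnot j)))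
  obtain ⟨k, hk, hik⟩ := exists_exchange_of_adjacent hr hconv hpq hadj hqp
  exact Function.not_lt_argmin (fun i => (inversions (r i) z).ncard) k
    (Set.ncard_lt_ncard (inversions_ssubset_of_exchange hpq hzpq hk hik))

theorem stmt10_general {P ι : Type*} [Finite P] (lt' : P → P → Prop) (r : ι → P → P → Prop)
    [∀ i, IsStrictTotalOrder P (r i)] (hr : ∀ i p q, lt' p q → r i p q)
    (hconv : Convex ℝ (⋃ i, RPP (r i) lt')) :
    Convex ℝ (⋃ i, orderPolytope (r i)) := by
  cases isEmpty_or_nonempty ι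
  · simpa only [Set.iUnion_of_empty] using convex_empty
  · exact iUnion_orderPolytope_eq_of_convex_iUnion_RPP hr hconv ▸ convex_orderPolytope _

/-- If `r_1, …, r_k` are linearizations of the partial order `lt'` on a finite set `P` and
the union of the simplices `Δ_{r_i, lt'} = conv{1_{max_{lt'} J} : J an order ideal of
(P, r_i)}` is convex, then the union of the order polytopes `O(P, r_i)` is also convex. -/
theorem stmt10 {P : Type*} [Fintype P] (lt' : P → P → Prop)
    (hlt'irr : ∀ p, ¬ lt' p p) (hlt'tr : ∀ a b c, lt' a b → lt' b c → lt' a c)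
    (k : ℕ) (r : Fin k → (P → P → Prop))
    (hirr : ∀ i p, ¬ r i p p) (htr : ∀ i a b c, r i a b → r i b c → r i a c)
    (htot : ∀ i (p q : P), p = q ∨ r i p q ∨ r i q p)
    (hstrong : ∀ i p q, lt' p q → r i p q)
    (hconv : Convex ℝ (⋃ i, RPP (r i) lt')) :
    Convex ℝ (⋃ i, orderPolytope (r i)) :=
  have _ i : IsStrictTotalOrder P (r i) :=
    { irrefl := hirr i
      trans := htr i
      trichotomous := fun p q hpq hqp => (htot i p q).resolve_right (not_or_intro hpq hqp) }
  stmt10_general lt' r hstrong hconv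
end

section
/- In the marked setup below, let λ be a nonnegative dominant marking. Then the marked relative poset polytope R_λ(P,<,<') is normal: for every integer m ≥ 1, every x ∈ ℤ^P with x ∈ m·R_λ(P,<,<') can be written as x = y_1 + ⋯ + y_m with each y_i an integer point of R_λ(P,<,<') (y_i ∈ ℤ^P and y_i ∈ R_λ(P,<,<')). -/
open Pointwise

/-- The fundamental marked relative poset polytope `R_{ω_K}(P, lt, lt')`: the convex hull
of the points `1_{max_{lt'} J}` over order ideals `J` of `(P, lt)` with `J ∩ P* = K`. -/
noncomputable def RPPfund {P : Type*} (lt lt' : P → P → Prop) (Pstar K : Set P) :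
    Set (P → ℝ) :=
  convexHull ℝ
    {x | ∃ J : Set P, IsLowerIdeal lt J ∧ J ∩ Pstar = K ∧ x = ind (maxElems lt' J)}

/-- The set `𝒥*` of order ideals of the subposet `(P*, lt)`. -/
def idealsOn {P : Type*} (lt : P → P → Prop) (Pstar : Set P) : Set (Set P) :=
  {K | K ⊆ Pstar ∧ ∀ p q : P, p ∈ Pstar → q ∈ Pstar → lt p q → q ∈ K → p ∈ K}

/-- The marked relative poset polytope for a coefficient function `α : 𝒥* → ℕ`:
the Minkowski sum `Σ_{K ∈ 𝒥*} α_K · R_{ω_K}(P, lt, lt')`. -/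
noncomputable def RPPmarked {P : Type*} [Fintype P] (lt lt' : P → P → Prop)
    (Pstar : Set P) (α : Set P → ℕ) : Set (P → ℝ) :=
  ∑ K ∈ (Set.toFinite (idealsOn lt Pstar)).toFinset, dilate (α K) (RPPfund lt lt' Pstar K)

/-!
Write `R_λ` in Cayley form: a point of the Minkowski sum is `∑_J c_J • 1_{max J}` for nonnegative
real weights `c` on the order ideals of `(P, <)` whose total over the ideals `J` with `J ∩ P* = K`
is `α K`. The relation `1_{max J₁} + 1_{max J₂} = 1_{max (J₁ ∪ J₂)} + 1_{max (J₁ *' J₂)}` allows one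
to exchange two incomparable ideals for their union and their star product, and since `α` lives on a
chain this leaves the totals unchanged. The weights that maximize the strictly increasing potential
`∑_J c_J 2^|J|` therefore live on a chain of ideals. Along a chain the vectors `1_{max J}` are
unitriangular, so for an integer point those weights are integers, and a family of natural number
weights with totals `m α` splits into `m` families with totals `α`.
-/

section FiberWeights

open Function

variable {X κ : Type*} {A : Set X} {f : X → κ}

/-- `c` is a nonnegative weight on `X`, supported in `A`, whose total over the fiber `f ⁻¹' {k}` is
`a k`. Such weights parametrize the Minkowski sum of the dilations by `a k` of the polytopes spanned
by the points that are indexed by the fibers of `f` over `k` in `A` (the Cayley trick). -/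
structure IsFiberWeight [Fintype X] [DecidableEq κ] {R : Type*} [AddCommMonoid R] [LE R]
    (A : Set X) (f : X → κ) (a : κ → R) (c : X → R) : Prop where
  nonneg : 0 ≤ c
  support_subset : support c ⊆ A
  sum_fiber : ∀ k, ∑ j with f j = k, c j = a k

namespace IsFiberWeight

variable [Fintype X] [DecidableEq κ]

theorem ne_zero_of_mem_support {R : Type*} [AddCommMonoid R] [PartialOrder R]
    [IsOrderedAddMonoid R] {a : κ → R} {c : X → R} (hc : IsFiberWeight A f a c) {j : X}
    (hj : j ∈ support c) : a (f j) ≠ 0 := by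
  intro h
  have hsum := hc.sum_fiber (f j)
  rw [h, Finset.sum_eq_zero_iff_of_nonneg fun i _ => hc.nonneg i] at hsum
  exact hj (hsum j (by simp))

theorem natCast_iff {R : Type*} [Semiring R] [PartialOrder R] [IsOrderedRing R] [CharZero R]
    {a : κ → ℕ} {c : X → ℕ} :
    IsFiberWeight A f (fun k => (a k : R)) (fun j => (c j : R)) ↔ IsFiberWeight A f a c := by
  have hsupp : support (fun j => (c j : R)) = support c := by ext; simp
  refine ⟨fun h => ⟨fun j => Nat.zero_le _, hsupp ▸ h.support_subset, fun k => ?_⟩,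
    fun h => ⟨fun j => Nat.cast_nonneg _, hsupp ▸ h.support_subset, fun k => ?_⟩⟩
  · exact_mod_cast h.sum_fiber k
  · exact_mod_cast h.sum_fiber k

theorem natCast_mul {R : Type*} [Semiring R] [PartialOrder R] [IsOrderedRing R] {a : κ → R}
    {c : X → R} (hc : IsFiberWeight A f a c) (m : ℕ) :
    IsFiberWeight A f (fun k => m * a k) (fun j => m * c j) where
  nonneg j := mul_nonneg m.cast_nonneg (hc.nonneg j)
  support_subset := (support_mul_subset_right _ _).trans hc.support_subset
  sum_fiber k := by rw [← Finset.mul_sum, hc.sum_fiber]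

end IsFiberWeight

section ConvexHull

variable [Fintype X] {V : Type*} [AddCommGroup V] [Module ℝ V] {v : X → V} {x : V}

theorem exists_weight_of_mem_convexHull_image (hx : x ∈ convexHull ℝ (v '' A)) :
    ∃ c ∈ stdSimplex ℝ X, support c ⊆ A ∧ ∑ j, c j • v j = x := by
  classical
  let W : Set (X → ℝ) := {c ∈ stdSimplex ℝ X | support c ⊆ A}
  have hW : Convex ℝ W := (convex_stdSimplex ℝ X).inter fun c hc d hd s t _ _ _ =>
    (support_add _ _).trans <| Set.union_subset
      ((support_const_smul_subset s c).trans hc) ((support_const_smul_subset t d).trans hd)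
  have hle : convexHull ℝ (v '' A) ⊆ Fintype.linearCombination ℝ v '' W := by
    refine convexHull_min ?_ (hW.linear_image _)
    rintro _ ⟨j, hj, rfl⟩
    refine ⟨Pi.single j 1, ⟨single_mem_stdSimplex ℝ j, ?_⟩, by simp⟩
    exact Pi.support_single_subset.trans (Set.singleton_subset_iff.2 hj)
  obtain ⟨c, ⟨hc, hcA⟩, rfl⟩ := hle hx
  exact ⟨c, hc, hcA, rfl⟩

theorem sum_smul_mem_smul_convexHull_image (hA : A.Nonempty) {c : X → ℝ} (hc : 0 ≤ c)
    (hcA : support c ⊆ A) :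
    ∑ j, c j • v j ∈ (∑ j, c j) • convexHull ℝ (v '' A) := by
  obtain h0 | hpos := (Finset.sum_nonneg fun j _ => hc j : 0 ≤ ∑ j, c j).eq_or_lt
  · have hc0 : c = 0 := (Fintype.sum_eq_zero_iff_of_nonneg hc).1 h0.symm
    simp [hc0, Set.zero_smul_set ((hA.image v).convexHull (𝕜 := ℝ))]
  · refine ⟨Finset.univ.centerMass c v, ?_, ?_⟩
    · rw [← Finset.centerMass_filter_ne_zero]
      refine Finset.centerMass_mem_convexHull _ (fun j _ => hc j) ?_ fun j hj =>
        Set.mem_image_of_mem v (hcA (Finset.mem_filter.1 hj).2)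
      rwa [Finset.sum_filter_ne_zero]
    · exact smul_inv_smul₀ hpos.ne' _

theorem exists_isFiberWeight_of_mem_sum [DecidableEq κ] {T : Finset κ} {a : κ → ℝ} (ha : 0 ≤ a)
    (hT : support a ⊆ T)
    (hx : x ∈ ∑ k ∈ T, a k • convexHull ℝ (v '' (A ∩ f ⁻¹' {k}))) :
    ∃ c, IsFiberWeight A f a c ∧ ∑ j, c j • v j = x := by
  obtain ⟨g, hg, rfl⟩ := (Set.mem_finsetSum _ _ _).1 hx
  choose! z hz hzg using fun k (hk : k ∈ T) => hg hk
  choose! c hc hcA hcz using fun k hk => exists_weight_of_mem_convexHull_image (hz k hk)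
  have hfiber : ∀ k ∈ T, ∀ l, ∑ j with f j = l, c k j = if k = l then 1 else 0 := by
    intro k hk l
    split_ifs with hkl
    · rw [← (hc k hk).2, Finset.sum_filter_of_ne]
      exact fun j _ hj => hkl ▸ (hcA k hk hj).2
    · refine Finset.sum_eq_zero fun j hj => by_contra fun h => hkl ?_
      exact (hcA k hk h).2.symm.trans (Finset.mem_filter.1 hj).2
  refine ⟨fun j => ∑ k ∈ T, a k * c k j, ⟨fun j => ?_, fun j hj => ?_, fun l => ?_⟩, ?_⟩
  · exact Finset.sum_nonneg fun k hk => mul_nonneg (ha k) ((hc k hk).1 j)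
  · obtain ⟨k, hk, hkj⟩ := Finset.exists_ne_zero_of_sum_ne_zero hj
    exact (hcA k hk (right_ne_zero_of_mul hkj)).1
  · rw [Finset.sum_comm]
    simp only [← Finset.mul_sum]
    rw [Finset.sum_congr rfl fun k hk => by rw [hfiber k hk l]]
    simpa using fun hl => (notMem_support.1 fun h => hl (hT h)).symm
  · simp only [Finset.sum_smul, mul_smul]
    rw [Finset.sum_comm]
    refine Finset.sum_congr rfl fun k hk => ?_
    rw [← Finset.smul_sum, hcz k hk]
    exact hzg k hk

theorem IsFiberWeight.sum_smul_mem_sum [DecidableEq κ] {T : Finset κ} {a : κ → ℝ} {c : X → ℝ}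
    (hc : IsFiberWeight A f a c) (hT : support a ⊆ T)
    (hne : ∀ k ∈ T, (A ∩ f ⁻¹' {k}).Nonempty) :
    ∑ j, c j • v j ∈ ∑ k ∈ T, a k • convexHull ℝ (v '' (A ∩ f ⁻¹' {k})) := by
  classical
  have hsplit : ∀ j, ∑ k ∈ T, (f ⁻¹' {k}).indicator c j = c j := fun j => by
    by_cases hj : c j = 0
    · simp [Set.indicator_apply, hj]
    · have hfj : f j ∈ T := hT (hc.ne_zero_of_mem_support hj)
      simp [Set.indicator_apply, hfj]
  have hsum : ∑ j, c j • v j = ∑ k ∈ T, ∑ j, (f ⁻¹' {k}).indicator c j • v j := by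
    rw [Finset.sum_comm]
    simp only [← Finset.sum_smul, hsplit]
  rw [hsum]
  refine Set.finsetSum_mem_finsetSum _ _ _ fun k hk => ?_
  have hk_sum : ∑ j, (f ⁻¹' {k}).indicator c j = a k := by
    simp [Set.indicator_apply, ← Finset.sum_filter, hc.sum_fiber]
  rw [← hk_sum]
  refine sum_smul_mem_smul_convexHull_image (hne k hk)
    (Set.indicator_nonneg fun j _ => hc.nonneg j) ?_
  rw [Set.support_indicator, Set.inter_comm]
  exact Set.inter_subset_inter_left _ hc.support_subset

end ConvexHull

section Exchange

variable [DecidableEq X]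

/-- The weight `c` with mass `ε` moved from each of the points `p` and `q` to `u` and `w`: the step
that a maximizer of a linear functional does not admit if it increases the functional. -/
noncomputable def exchange (c : X → ℝ) (ε : ℝ) (p q u w : X) : X → ℝ :=
  c + ε • (Pi.single u 1 + Pi.single w 1 - Pi.single p 1 - Pi.single q 1)

theorem sum_exchange_smul [Fintype X] {V : Type*} [AddCommGroup V] [Module ℝ V] (v : X → V)
    (c : X → ℝ) (ε : ℝ) (p q u w : X) :
    ∑ j, exchange c ε p q u w j • v j =
      ∑ j, c j • v j + ε • (v u + v w - v p - v q) := by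
  simp only [← Fintype.linearCombination_apply, exchange, map_add, map_smul, map_sub,
    Fintype.linearCombination_apply_single, one_smul]

theorem exchange_nonneg {c : X → ℝ} (hc : 0 ≤ c) {ε : ℝ} (hε : 0 ≤ ε) {p q : X} (hpq : p ≠ q)
    (hp : ε ≤ c p) (hq : ε ≤ c q) (u w : X) : 0 ≤ exchange c ε p q u w := by
  intro j
  have hle : ε * ((Pi.single p 1 : X → ℝ) j + (Pi.single q 1 : X → ℝ) j) ≤ c j := by
    rcases eq_or_ne j p with rfl | hjp
    · simpa [hpq] using hp
    rcases eq_or_ne j q with rfl | hjq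
    · simpa [hjp] using hq
    · simpa [hjp, hjq] using hc j
  have hnonneg : 0 ≤ (Pi.single u 1 : X → ℝ) j + (Pi.single w 1 : X → ℝ) j :=
    add_nonneg ((Pi.single_nonneg.2 zero_le_one : (0 : X → ℝ) ≤ Pi.single u 1) j)
      ((Pi.single_nonneg.2 zero_le_one : (0 : X → ℝ) ≤ Pi.single w 1) j)
  have := mul_nonneg hε hnonneg
  simp only [exchange, Pi.zero_apply, Pi.add_apply, Pi.smul_apply, Pi.sub_apply, smul_eq_mul]
  linarith

theorem support_exchange_subset {c : X → ℝ} (hc : support c ⊆ A) (ε : ℝ) {p q u w : X} (hp : p ∈ A)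
    (hq : q ∈ A) (hu : u ∈ A) (hw : w ∈ A) : support (exchange c ε p q u w) ⊆ A := by
  refine support_subset_iff'.2 fun j hj => ?_
  have hne : ∀ i ∈ A, (Pi.single i 1 : X → ℝ) j = 0 := fun i hi =>
    Pi.single_eq_of_ne (ne_of_mem_of_not_mem hi hj).symm 1
  simp [exchange, support_subset_iff'.1 hc j hj, hne, hp, hq, hu, hw]

end Exchange

section Straightening

variable [Fintype X] {V : Type*} [AddCommGroup V] [Module ℝ V] [TopologicalSpace V]
  [IsTopologicalAddGroup V] [ContinuousSMul ℝ V] [T2Space V] {φ : X → ℝ} {v : X → V}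
  {S : X → X → Prop}

theorem isCompact_setOf_weight (v : X → V) (A : Set X) (s : ℝ) (x : V) :
    IsCompact {c : X → ℝ | 0 ≤ c ∧ support c ⊆ A ∧ ∑ j, c j = s ∧ ∑ j, c j • v j = x} := by
  refine (isCompact_Icc (a := 0) (b := fun _ => s)).of_isClosed_subset ?_ ?_
  · simp only [support_subset_iff', Set.ofPred_and, Set.ofPred_forall]
    refine isClosed_Ici.inter (IsClosed.inter ?_ (IsClosed.inter ?_ ?_))
    · exact isClosed_biInter fun j _ => isClosed_eq (continuous_apply j) continuous_const
    · exact isClosed_eq (by fun_prop) continuous_const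
    · exact isClosed_eq (by fun_prop) continuous_const
  · rintro c ⟨hc, -, rfl, -⟩
    exact ⟨hc, fun j => Finset.single_le_sum (fun i _ => hc i) (Finset.mem_univ j)⟩

theorem exists_weight_pairwise_support
    (h : A.Pairwise fun p q => S p q ∨
      ∃ u ∈ A, ∃ w ∈ A, v p + v q = v u + v w ∧ φ p + φ q < φ u + φ w)
    {c₀ : X → ℝ} (hc₀ : 0 ≤ c₀) (hc₀A : support c₀ ⊆ A) :
    ∃ c : X → ℝ, 0 ≤ c ∧ support c ⊆ A ∧ ∑ j, c j • v j = ∑ j, c₀ j • v j ∧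
      (support c).Pairwise S := by
  classical
  obtain ⟨c, ⟨hc, hcA, hcs, hcv⟩, hmax⟩ :=
    (isCompact_setOf_weight v A (∑ j, c₀ j) (∑ j, c₀ j • v j)).exists_isMaxOn
      ⟨c₀, hc₀, hc₀A, rfl, rfl⟩ (f := fun c => ∑ j, c j • φ j) (by fun_prop)
  refine ⟨c, hc, hcA, hcv, fun p hp q hq hpq => ?_⟩
  obtain hS | ⟨u, hu, w, hw, hv, hφ⟩ := h (hcA hp) (hcA hq) hpq
  · exact hS
  exfalso
  let ε := min (c p) (c q)
  have hε : 0 < ε := lt_min ((hc p).lt_of_ne' hp) ((hc q).lt_of_ne' hq)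
  have hle : ∑ j, exchange c ε p q u w j • φ j ≤ ∑ j, c j • φ j := by
    refine hmax ⟨exchange_nonneg hc hε.le hpq (min_le_left _ _) (min_le_right _ _) u w,
      support_exchange_subset hcA ε (hcA hp) (hcA hq) hu hw, ?_, ?_⟩
    · simpa [hcs] using sum_exchange_smul (fun _ => (1 : ℝ)) c ε p q u w
    · rw [sum_exchange_smul, hcv, sub_sub, hv, sub_self, smul_zero, add_zero]
  rw [sum_exchange_smul, smul_eq_mul] at hle
  nlinarith

theorem IsFiberWeight.exists_pairwise_support [DecidableEq κ] {a : κ → ℝ}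
    (h : ∀ p ∈ A, ∀ q ∈ A, a (f p) ≠ 0 → a (f q) ≠ 0 → p ≠ q → S p q ∨
      ∃ u ∈ A, ∃ w ∈ A, v p + v q = v u + v w ∧ s(f p, f q) = s(f u, f w) ∧
        φ p + φ q < φ u + φ w)
    {c₀ : X → ℝ} (hc₀ : IsFiberWeight A f a c₀) :
    ∃ c, IsFiberWeight A f a c ∧ ∑ j, c j • v j = ∑ j, c₀ j • v j ∧ (support c).Pairwise S := by
  have hfiber : ∀ (c : X → ℝ) k, (∑ j, c j • (Pi.single (f j) 1 : κ → ℝ)) k =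
      ∑ j with f j = k, c j := fun c k => by
    simp [Finset.sum_apply, Finset.sum_filter, Pi.single_apply, eq_comm]
  have hA : {p ∈ A | a (f p) ≠ 0}.Pairwise fun p q => S p q ∨
      ∃ u ∈ {p ∈ A | a (f p) ≠ 0}, ∃ w ∈ {p ∈ A | a (f p) ≠ 0},
        (v p, (Pi.single (f p) 1 : κ → ℝ)) + (v q, Pi.single (f q) 1) =
          (v u, Pi.single (f u) 1) + (v w, Pi.single (f w) 1) ∧ φ p + φ q < φ u + φ w := by
    rintro p ⟨hp, hap⟩ q ⟨hq, haq⟩ hpq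
    refine (h p hp q hq hap haq hpq).imp_right ?_
    rintro ⟨u, hu, w, hw, hv, hf, hφ⟩
    rcases Sym2.eq_iff.1 hf with ⟨hpu, hqw⟩ | ⟨hpw, hqu⟩
    · exact ⟨u, ⟨hu, hpu ▸ hap⟩, w, ⟨hw, hqw ▸ haq⟩, by simp [hv, hpu, hqw], hφ⟩
    · exact ⟨u, ⟨hu, hqu ▸ haq⟩, w, ⟨hw, hpw ▸ hap⟩, by simp [hv, hpw, hqu, add_comm], hφ⟩
  obtain ⟨c, hc, hcA, hcv, hcS⟩ := exists_weight_pairwise_support hA hc₀.nonneg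
    fun p hp => ⟨hc₀.support_subset hp, hc₀.ne_zero_of_mem_support hp⟩
  simp only [Prod.ext_iff, Prod.fst_sum, Prod.snd_sum, Prod.smul_fst, Prod.smul_snd] at hcv
  refine ⟨c, ⟨hc, hcA.trans (Set.sep_subset _ _), fun k => ?_⟩, hcv.1, hcS⟩
  rw [← hfiber, hcv.2, hfiber, hc₀.sum_fiber]

end Straightening

section Splitting

theorem exists_natCast_eq_of_mem_range {R : Type*} [Ring R] [LinearOrder R] [IsStrictOrderedRing R]
    {c : X → R} (hc : 0 ≤ c) (hZ : ∀ j, c j ∈ (Int.castAddHom R).range) :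
    ∃ n : X → ℕ, c = fun j => (n j : R) := by
  choose k hk using hZ
  have hk_nonneg : 0 ≤ k := fun j => Int.cast_nonneg_iff.1 ((hc j).trans_eq (hk j).symm)
  lift k to X → ℕ using hk_nonneg
  exact ⟨k, funext fun j => by simp [← hk j]⟩

theorem exists_le_sum_eq {ι : Type*} (s : Finset ι) (n : ι → ℕ) {a : ℕ}
    (h : a ≤ ∑ j ∈ s, n j) : ∃ b ≤ n, ∑ j ∈ s, b j = a := by
  classical
  induction a with
  | zero => exact ⟨0, fun _ => Nat.zero_le _, by simp⟩
  | succ a ih =>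
    obtain ⟨b, hb, hsum⟩ := ih (by omega)
    obtain ⟨j, hj, hlt⟩ : ∃ j ∈ s, b j < n j := Finset.exists_lt_of_sum_lt (by omega)
    refine ⟨b + Pi.single j 1, fun i => ?_, by simp [Finset.sum_add_distrib, hsum, hj]⟩
    rcases eq_or_ne i j with rfl | hij
    · simpa using hlt
    · simpa [hij] using hb i

namespace IsFiberWeight

variable [Fintype X] [DecidableEq κ]

theorem exists_le {a a' : κ → ℕ} {n : X → ℕ} (hn : IsFiberWeight A f a n) (ha : a' ≤ a) :
    ∃ b ≤ n, IsFiberWeight A f a' b := by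
  choose b hbn hb using fun k =>
    exists_le_sum_eq {j | f j = k} n ((ha k).trans_eq (hn.sum_fiber k).symm)
  refine ⟨fun j => b (f j) j, fun j => hbn (f j) j, fun j => Nat.zero_le _, fun j hj => ?_,
    fun k => ?_⟩
  · exact hn.support_subset fun h => hj (Nat.le_zero.1 (h ▸ hbn (f j) j))
  · rw [← hb k]
    exact Finset.sum_congr rfl fun j hj => by rw [(Finset.mem_filter.1 hj).2]

theorem tsub {a b : κ → ℕ} {n l : X → ℕ} (hn : IsFiberWeight A f a n) (hl : IsFiberWeight A f b l)
    (hln : l ≤ n) : IsFiberWeight A f (a - b) (n - l) where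
  nonneg _ := Nat.zero_le _
  support_subset j hj := hn.support_subset fun h => hj (by simp [h])
  sum_fiber k := by
    simp only [Pi.sub_apply]
    rw [Finset.sum_tsub_distrib _ fun j _ => hln j, hn.sum_fiber, hl.sum_fiber]

theorem exists_sum_eq {a : κ → ℕ} {m : ℕ} {n : X → ℕ} (hn : IsFiberWeight A f (m • a) n) :
    ∃ ν : Fin m → X → ℕ, (∀ i, IsFiberWeight A f a (ν i)) ∧ ∑ i, ν i = n := by
  induction m generalizing n with
  | zero =>
    refine ⟨Fin.elim0, fun i => i.elim0, ?_⟩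
    ext j
    by_contra hj
    exact hn.ne_zero_of_mem_support (j := j) (Ne.symm (by simpa using hj)) (by simp)
  | succ m ih =>
    obtain ⟨b, hbn, hb⟩ := hn.exists_le (a' := a) (by
      rw [succ_nsmul]; exact le_add_of_nonneg_left fun _ => Nat.zero_le _)
    obtain ⟨ν, hν, hsum⟩ := ih (by
      simpa only [succ_nsmul, add_tsub_cancel_right] using hn.tsub hb hbn)
    refine ⟨Fin.cons b ν, Fin.cases (by simpa using hb) (by simpa using hν), ?_⟩
    rw [Fin.sum_univ_succ]
    simpa [hsum] using add_tsub_cancel_of_le hbn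

end IsFiberWeight

end Splitting

end FiberWeights

section Ideals

variable {P : Type*} {r : P → P → Prop} {I J : Set P}

theorem IsLowerIdeal.mono {s : P → P → Prop} (hrs : ∀ p q, r p q → s p q) (hJ : IsLowerIdeal s J) :
    IsLowerIdeal r J := fun _ _ h hq => hJ (hrs _ _ h) hq

theorem IsLowerIdeal.union (hI : IsLowerIdeal r I) (hJ : IsLowerIdeal r J) :
    IsLowerIdeal r (I ∪ J) := fun _ _ h => Or.imp (hI h) (hJ h)

theorem starOp_subset_inter (hI : IsLowerIdeal r I) (hJ : IsLowerIdeal r J) :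
    starOp r I J ⊆ I ∩ J := by
  rintro p ⟨q, ⟨⟨hqI, hqJ⟩, -⟩, rfl | hpq⟩
  · exact ⟨hqI, hqJ⟩
  · exact ⟨hI hpq hqI, hJ hpq hqJ⟩

theorem starOp_inter_eq {A : Set P} (hA : ∀ p ∈ A, ∀ q, ¬ r p q) (hI : IsLowerIdeal r I)
    (hJ : IsLowerIdeal r J) : starOp r I J ∩ A = I ∩ J ∩ A := by
  refine (Set.inter_subset_inter_left A (starOp_subset_inter hI hJ)).antisymm ?_
  rintro p ⟨hp, hpA⟩
  exact ⟨⟨p, ⟨hp, Or.inl ⟨hp.1, fun q _ => hA p hpA q⟩⟩, Or.inl rfl⟩, hpA⟩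

theorem maxElems_starOp [IsTrans P r] :
    maxElems r (starOp r I J) = I ∩ J ∩ (maxElems r I ∪ maxElems r J) := by
  ext p
  constructor
  · rintro ⟨⟨q, hq, rfl | hpq⟩, hmax⟩
    · exact hq
    · exact absurd hpq (hmax q ⟨q, hq, Or.inl rfl⟩)
  · intro hp
    refine ⟨⟨p, hp, Or.inl rfl⟩, ?_⟩
    rintro q ⟨s, ⟨⟨hsI, hsJ⟩, -⟩, hqs⟩ hpq
    have hps : r p s := hqs.elim (fun h => h ▸ hpq) (_root_.trans hpq)
    exact hp.2.elim (fun h => h.2 s hsI hps) (fun h => h.2 s hsJ hps)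

theorem mem_maxElems_union (hI : IsLowerIdeal r I) (hJ : IsLowerIdeal r J) {p : P} :
    p ∈ maxElems r (I ∪ J) ↔
      p ∈ I ∪ J ∧ (p ∈ I → p ∈ maxElems r I) ∧ (p ∈ J → p ∈ maxElems r J) := by
  constructor
  · rintro ⟨hp, hmax⟩
    exact ⟨hp, fun h => ⟨h, fun q hq => hmax q (Or.inl hq)⟩,
      fun h => ⟨h, fun q hq => hmax q (Or.inr hq)⟩⟩
  · rintro ⟨hp, hpI, hpJ⟩
    refine ⟨hp, ?_⟩
    rintro q (hq | hq) hpq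
    · exact (hpI (hI hpq hq)).2 q hq hpq
    · exact (hpJ (hJ hpq hq)).2 q hq hpq

theorem ind_maxElems_add [IsTrans P r] (hI : IsLowerIdeal r I) (hJ : IsLowerIdeal r J) :
    ind (maxElems r I) + ind (maxElems r J) =
      ind (maxElems r (I ∪ J)) + ind (maxElems r (starOp r I J)) := by
  classical
  ext p
  have hpI : p ∈ maxElems r I → p ∈ I := fun h => h.1
  have hpJ : p ∈ maxElems r J → p ∈ J := fun h => h.1
  simp only [ind, Pi.add_apply, Set.indicator_apply, mem_maxElems_union hI hJ, maxElems_starOp,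
    Set.mem_inter_iff, Set.mem_union, Pi.one_apply]
  by_cases p ∈ I <;> by_cases p ∈ J <;> by_cases p ∈ maxElems r I <;>
    by_cases p ∈ maxElems r J <;> simp_all

theorem sym2_inter_union_starOp {A : Set P} (hA : ∀ p ∈ A, ∀ q, ¬ r p q) (hI : IsLowerIdeal r I)
    (hJ : IsLowerIdeal r J) (hIJ : I ∩ A ⊆ J ∩ A ∨ J ∩ A ⊆ I ∩ A) :
    s(I ∩ A, J ∩ A) = s((I ∪ J) ∩ A, starOp r I J ∩ A) := by
  rw [starOp_inter_eq hA hI hJ, Set.union_inter_distrib_right, Set.inter_inter_distrib_right]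
  rcases hIJ with h | h
  · rw [Set.union_eq_right.2 h, Set.inter_eq_left.2 h, Sym2.eq_swap]
  · rw [Set.union_eq_left.2 h, Set.inter_eq_right.2 h]

theorem two_pow_ncard_add_lt [Finite P] (hIJ : ¬ (I ⊆ J ∨ J ⊆ I)) (K : Set P) :
    (2 : ℝ) ^ I.ncard + 2 ^ J.ncard < 2 ^ (I ∪ J).ncard + 2 ^ K.ncard := by
  rw [not_or] at hIJ
  have hI : I.ncard + 1 ≤ (I ∪ J).ncard :=
    Set.ncard_lt_ncard (Set.ssubset_union_left_iff.2 hIJ.2)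
  have hJ : J.ncard + 1 ≤ (I ∪ J).ncard :=
    Set.ncard_lt_ncard (Set.ssubset_union_right_iff.2 hIJ.1)
  have hI' : (2 : ℝ) ^ (I.ncard + 1) ≤ 2 ^ (I ∪ J).ncard := pow_le_pow_right₀ one_le_two hI
  have hJ' : (2 : ℝ) ^ (J.ncard + 1) ≤ 2 ^ (I ∪ J).ncard := pow_le_pow_right₀ one_le_two hJ
  have hK : (0 : ℝ) < 2 ^ K.ncard := by positivity
  rw [pow_succ] at hI' hJ'
  linarith

theorem exists_maxElems_forall_notMem [Finite P] [IsStrictOrder P r] {𝓒 : Set (Set P)}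
    (h𝓒 : IsChain (· ⊆ ·) 𝓒) (hlow : ∀ I ∈ 𝓒, IsLowerIdeal r I) (hss : ∀ I ∈ 𝓒, I ⊂ J)
    (hJ : J.Nonempty) : ∃ p ∈ maxElems r J, ∀ I ∈ 𝓒, p ∉ I := by
  have hdiff : (J \ ⋃₀ 𝓒).Nonempty := by
    rw [Set.sdiff_nonempty]
    intro hJ𝓒
    obtain ⟨p, hp⟩ := hJ
    obtain ⟨I, hI, -⟩ := hJ𝓒 hp
    obtain ⟨I, hI, hJI⟩ :=
      h𝓒.directedOn.exists_mem_subset_of_finite_of_subset_sUnion ⟨I, hI⟩ J.toFinite hJ𝓒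
    exact (hss I hI).not_subset hJI
  obtain ⟨p, ⟨hpJ, hp𝓒⟩, hmax⟩ :=
    (Finite.wellFounded_of_trans_of_irrefl (Function.swap r)).has_min _ hdiff
  refine ⟨p, ⟨hpJ, fun q hq hpq => hmax q ⟨hq, ?_⟩ hpq⟩, fun I hI hpI => hp𝓒 ⟨I, hI, hpI⟩⟩
  rintro ⟨I, hI, hqI⟩
  exact hp𝓒 ⟨I, hI, hlow I hI hpq hqI⟩

theorem mem_addSubgroup_of_sum_maxElems_mem [Fintype P] [IsStrictOrder P r] (Z : AddSubgroup ℝ)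
    {c : Set P → ℝ} (hchain : IsChain (· ⊆ ·) (Function.support c))
    (hlow : ∀ I ∈ Function.support c, IsLowerIdeal r I)
    (hZ : ∀ p, ∑ I, c I * ind (maxElems r I) p ∈ Z) (hJ : J.Nonempty) : c J ∈ Z := by
  induction J using WellFoundedGT.induction with
  | ind J ih =>
    by_cases hcJ : c J = 0
    · exact hcJ ▸ Z.zero_mem
    obtain ⟨p, hpJ, hp⟩ := exists_maxElems_forall_notMem
      (hchain.mono (Set.sep_subset _ (· ⊂ J))) (fun I hI => hlow I hI.1) (fun I hI => hI.2) hJ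
    have hother : ∀ I ∈ Finset.univ.erase J, c I * ind (maxElems r I) p ∈ Z := by
      intro I hI
      by_cases hcI : c I = 0
      · simp [hcI]
      by_cases hpI : p ∈ maxElems r I
      · have hJI : J ⊂ I := (hchain.total hcJ hcI).elim
          (fun h => h.ssubset_of_ne (Finset.ne_of_mem_erase hI).symm)
          (fun h => absurd hpI.1 (hp I ⟨hcI, h.ssubset_of_ne (Finset.ne_of_mem_erase hI)⟩))
        simpa [ind, hpI] using ih I hJI ⟨p, hpI.1⟩
      · simp [ind, hpI]
    have hsum := hZ p
    rw [← Finset.add_sum_erase _ _ (Finset.mem_univ J),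
      Z.add_mem_cancel_right (Z.sum_mem hother)] at hsum
    simpa [ind, hpJ] using hsum

end Ideals

section Marked

variable {P : Type*} [Fintype P] {lt lt' : P → P → Prop} {Pstar : Set P} {α : Set P → ℕ}

theorem RPPmarked_eq_sum :
    RPPmarked lt lt' Pstar α = ∑ K ∈ (idealsOn lt Pstar).toFinite.toFinset, (α K : ℝ) •
      convexHull ℝ
        ((fun J => ind (maxElems lt' J)) '' ({J | IsLowerIdeal lt J} ∩ (· ∩ Pstar) ⁻¹' {K})) := by
  have hfund : ∀ K, RPPfund lt lt' Pstar K = convexHull ℝ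
      ((fun J => ind (maxElems lt' J)) '' ({J | IsLowerIdeal lt J} ∩ (· ∩ Pstar) ⁻¹' {K})) := by
    intro K
    rw [RPPfund]
    congr 1
    ext x
    simp [and_assoc, eq_comm (a := x)]
  simp only [RPPmarked, hfund]
  rfl

theorem exists_isLowerIdeal_inter_eq_of_mem_RPPmarked {x : P → ℝ}
    (hx : x ∈ RPPmarked lt lt' Pstar α) {K : Set P} (hK : K ∈ idealsOn lt Pstar) :
    ({J | IsLowerIdeal lt J} ∩ (· ∩ Pstar) ⁻¹' {K}).Nonempty := by
  rw [RPPmarked_eq_sum] at hx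
  obtain ⟨g, hg, -⟩ := (Set.mem_finsetSum _ _ _).1 hx
  have hgK := hg ((idealsOn lt Pstar).toFinite.mem_toFinset.2 hK)
  exact (convexHull_nonempty_iff.1 (Set.smul_set_nonempty.1 ⟨_, hgK⟩)).of_image

theorem intCast_sum_indicator (n : Set P → ℕ) :
    (fun p => ((∑ J, (n J : ℤ) * (maxElems lt' J).indicator 1 p : ℤ) : ℝ)) =
      ∑ J, (n J : ℝ) • ind (maxElems lt' J) := by
  classical
  ext p
  simp [ind, Set.indicator_apply]

variable [DecidableEq (Set P)]

theorem exists_isFiberWeight_isChain [IsTrans P lt'] (hweak : ∀ p q, lt' p q → lt p q)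
    (hstar : ∀ I J, IsLowerIdeal lt I → IsLowerIdeal lt J → IsLowerIdeal lt (starOp lt' I J))
    (hPstar : ∀ p ∈ Pstar, ∀ q, ¬ lt' p q) {a : Set P → ℝ}
    (ha : IsChain (· ⊆ ·) (Function.support a)) {c₀ : Set P → ℝ}
    (hc₀ : IsFiberWeight {J | IsLowerIdeal lt J} (· ∩ Pstar) a c₀) :
    ∃ c, IsFiberWeight {J | IsLowerIdeal lt J} (· ∩ Pstar) a c ∧
      ∑ J, c J • ind (maxElems lt' J) = ∑ J, c₀ J • ind (maxElems lt' J) ∧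
      IsChain (· ⊆ ·) (Function.support c) := by
  refine hc₀.exists_pairwise_support (v := fun J => ind (maxElems lt' J))
    (S := fun I J => I ⊆ J ∨ J ⊆ I) (φ := fun J => (2 : ℝ) ^ J.ncard)
    fun I hI J hJ haI haJ _ => or_iff_not_imp_left.2 fun hIJ => ?_
  have hI' : IsLowerIdeal lt' I := hI.mono hweak
  have hJ' : IsLowerIdeal lt' J := hJ.mono hweak
  exact ⟨I ∪ J, hI.union hJ, starOp lt' I J, hstar I J hI hJ, ind_maxElems_add hI' hJ',
    sym2_inter_union_starOp hPstar hI' hJ' (ha.total haI haJ), two_pow_ncard_add_lt hIJ _⟩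

theorem IsFiberWeight.mem_addSubgroup_of_isChain_support [IsStrictOrder P lt']
    (hweak : ∀ p q, lt' p q → lt p q) {Z : AddSubgroup ℝ} {a c : Set P → ℝ}
    (hc : IsFiberWeight {J | IsLowerIdeal lt J} (· ∩ Pstar) a c)
    (hchain : IsChain (· ⊆ ·) (Function.support c)) (ha : a ∅ ∈ Z)
    (hZ : ∀ p, (∑ J, c J • ind (maxElems lt' J)) p ∈ Z) (J : Set P) : c J ∈ Z := by
  have hne : ∀ J : Set P, J.Nonempty → c J ∈ Z := fun J =>
    mem_addSubgroup_of_sum_maxElems_mem Z hchain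
      (fun I hI => (hc.support_subset hI).mono hweak) (by simpa using hZ)
  obtain rfl | hJ := J.eq_empty_or_nonempty
  · rw [← Set.empty_inter Pstar, ← hc.sum_fiber,
      ← Finset.add_sum_erase _ _ (a := ∅) (by simp)] at ha
    refine (Z.add_mem_cancel_right (Z.sum_mem fun I hI => hne I ?_)).1 ha
    exact Set.nonempty_iff_ne_empty.2 (Finset.ne_of_mem_erase hI)
  · exact hne J hJ

theorem exists_natCast_isFiberWeight [IsStrictOrder P lt'] (hweak : ∀ p q, lt' p q → lt p q)
    (hstar : ∀ I J, IsLowerIdeal lt I → IsLowerIdeal lt J → IsLowerIdeal lt (starOp lt' I J))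
    (hPstar : ∀ p ∈ Pstar, ∀ q, ¬ lt' p q) (hα : IsChain (· ⊆ ·) (Function.support α))
    {c : Set P → ℝ}
    (hc : IsFiberWeight {J | IsLowerIdeal lt J} (· ∩ Pstar) (fun K => (α K : ℝ)) c) {x : P → ℤ}
    (hx : ∑ J, c J • ind (maxElems lt' J) = fun p => (x p : ℝ)) :
    ∃ n : Set P → ℕ, IsFiberWeight {J | IsLowerIdeal lt J} (· ∩ Pstar) α n ∧
      ∑ J, (n J : ℝ) • ind (maxElems lt' J) = fun p => (x p : ℝ) := by
  obtain ⟨d, hd, hdx, hchain⟩ := exists_isFiberWeight_isChain hweak hstar hPstar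
    (hα.mono fun K hK => by simpa using hK) hc
  have hZ : ∀ J, d J ∈ (Int.castAddHom ℝ).range :=
    hd.mem_addSubgroup_of_isChain_support hweak hchain ⟨α ∅, by simp⟩
      fun p => ⟨x p, by rw [hdx, hx]; rfl⟩
  obtain ⟨n, rfl⟩ := exists_natCast_eq_of_mem_range hd.nonneg hZ
  exact ⟨n, IsFiberWeight.natCast_iff.1 hd, hdx.trans hx⟩

theorem exists_isFiberWeight_of_mem_RPPmarked
    (hα : Function.support α ⊆ idealsOn lt Pstar) {x : P → ℝ}
    (hx : x ∈ RPPmarked lt lt' Pstar α) :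
    ∃ c, IsFiberWeight {J | IsLowerIdeal lt J} (· ∩ Pstar) (fun K => (α K : ℝ)) c ∧
      ∑ J, c J • ind (maxElems lt' J) = x := by
  rw [RPPmarked_eq_sum] at hx
  refine exists_isFiberWeight_of_mem_sum (fun K => (α K).cast_nonneg) (fun K hK => ?_) hx
  simpa using hα (by simpa using hK)

theorem IsFiberWeight.sum_smul_mem_RPPmarked {c : Set P → ℝ}
    (hα : Function.support α ⊆ idealsOn lt Pstar)
    (hc : IsFiberWeight {J | IsLowerIdeal lt J} (· ∩ Pstar) (fun K => (α K : ℝ)) c)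
    (hne : (RPPmarked lt lt' Pstar α).Nonempty) :
    ∑ J, c J • ind (maxElems lt' J) ∈ RPPmarked lt lt' Pstar α := by
  obtain ⟨x, hx⟩ := hne
  rw [RPPmarked_eq_sum]
  refine hc.sum_smul_mem_sum (fun K hK => ?_) fun K hK => ?_
  · simpa using hα (by simpa using hK)
  · exact exists_isLowerIdeal_inter_eq_of_mem_RPPmarked hx (by simpa using hK)

end Marked

theorem stmt15_general {P : Type*} [Fintype P] (lt lt' : P → P → Prop) [IsStrictOrder P lt']
    (hweak : ∀ p q, lt' p q → lt p q)
    (hstar : ∀ J1 J2 : Set P, IsLowerIdeal lt J1 → IsLowerIdeal lt J2 →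
      IsLowerIdeal lt (starOp lt' J1 J2))
    (Pstar : Set P) (hPstar : ∀ p ∈ Pstar, ∀ q : P, ¬ lt' p q)
    (α : Set P → ℕ) (hsupp : Function.support α ⊆ idealsOn lt Pstar)
    (hchain : IsChain (· ⊆ ·) (Function.support α))
    (m : ℕ) (x : P → ℤ)
    (hx : (fun p => (x p : ℝ)) ∈ dilate m (RPPmarked lt lt' Pstar α)) :
    ∃ y : Fin m → P → ℤ,
      (∀ i, (fun p => (y i p : ℝ)) ∈ RPPmarked lt lt' Pstar α) ∧
      (fun p => (x p : ℝ)) = ∑ i, (fun p => (y i p : ℝ)) := by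
  classical
  obtain ⟨z, hz, hzx⟩ := hx
  obtain ⟨c, hc, rfl⟩ := exists_isFiberWeight_of_mem_RPPmarked hsupp hz
  have hmc : IsFiberWeight {J | IsLowerIdeal lt J} (· ∩ Pstar)
      (fun K => (((m • α) K : ℕ) : ℝ)) (fun J => m * c J) := by
    simpa using hc.natCast_mul m
  obtain ⟨n, hn, hnx⟩ := exists_natCast_isFiberWeight hweak hstar hPstar
    (hchain.mono (Function.support_const_smul_subset m α)) hmc (x := x)
    (by simpa only [mul_smul, Finset.smul_sum] using hzx)
  obtain ⟨ν, hν, rfl⟩ := hn.exists_sum_eq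
  refine ⟨fun i p => ∑ J, (ν i J : ℤ) * (maxElems lt' J).indicator 1 p, fun i => ?_, ?_⟩
  · rw [intCast_sum_indicator]
    exact (IsFiberWeight.natCast_iff.2 (hν i)).sum_smul_mem_RPPmarked hsupp ⟨_, hz⟩
  · simp only [intCast_sum_indicator, ← hnx, Finset.sum_apply, Nat.cast_sum, Finset.sum_smul]
    exact Finset.sum_comm

/-- For a nonnegative dominant marking `λ` with decomposition coefficients `α`, the marked
relative poset polytope `R_λ(P, lt, lt')` is normal: every integer point of
`m·R_λ(P, lt, lt')` is a sum of `m` integer points of `R_λ(P, lt, lt')`. -/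
theorem stmt15 {P : Type*} [Fintype P] (lt lt' : P → P → Prop)
    (hltirr : ∀ p, ¬ lt p p) (hlttr : ∀ a b c, lt a b → lt b c → lt a c)
    (hlt'irr : ∀ p, ¬ lt' p p) (hlt'tr : ∀ a b c, lt' a b → lt' b c → lt' a c)
    (hweak : ∀ p q, lt' p q → lt p q)
    (hstar : ∀ J1 J2 : Set P, IsLowerIdeal lt J1 → IsLowerIdeal lt J2 →
      IsLowerIdeal lt (starOp lt' J1 J2))
    (Pstar : Set P)
    (hmin : ∀ p : P, (∀ q, ¬ lt q p) → p ∈ Pstar)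
    (hmax : ∀ p : P, (∀ q, ¬ lt p q) → p ∈ Pstar)
    (hiii : ∀ p ∈ Pstar, ∀ q : P, ¬ lt' p q)
    (lam : P → ℤ) (α : Set P → ℕ)
    (hlamnn : ∀ p ∈ Pstar, 0 ≤ lam p)
    (hdom : ∀ p q : P, p ∈ Pstar → q ∈ Pstar → lt p q → lam q ≤ lam p)
    (hαsupp : ∀ K : Set P, α K ≠ 0 → K ∈ idealsOn lt Pstar ∧ K.Nonempty)
    (hαchain : ∀ K1 K2 : Set P, α K1 ≠ 0 → α K2 ≠ 0 → K1 ⊆ K2 ∨ K2 ⊆ K1)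
    (hαsum : ∀ p ∈ Pstar, lam p =
      ∑ K ∈ (Set.toFinite (idealsOn lt Pstar)).toFinset, (α K : ℤ) * K.indicator 1 p)
    (m : ℕ) (hm : 1 ≤ m) (x : P → ℤ)
    (hx : (fun p => (x p : ℝ)) ∈ dilate m (RPPmarked lt lt' Pstar α)) :
    ∃ y : Fin m → P → ℤ,
      (∀ i, (fun p => (y i p : ℝ)) ∈ RPPmarked lt lt' Pstar α) ∧
      (fun p => (x p : ℝ)) = ∑ i, (fun p => (y i p : ℝ)) := by
  have : IsStrictOrder P lt' := { irrefl := hlt'irr, trans := hlt'tr }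
  exact stmt15_general lt lt' hweak hstar Pstar hiii α (fun K hK => (hαsupp K hK).1)
    (fun K₁ h₁ K₂ h₂ _ => hαchain K₁ K₂ h₁ h₂) m x hx
end
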